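/- arXiv:2603.06322 — 2 statements merged into one kernel-verified Lean document; each statement's English description precedes it below -/
import Mathlib

section
/- Let α ∈ ℝ and let ψ : ℝ → ℂ be three times continuously differentiable. Define the vector field u(x,y) = e^{iαx}·(−ψ'(y), iα·ψ(y)) (i.e. u = ∇⊥(e^{iαx}ψ(y))). Then the scalar curl of the convective term (u·∇)u satisfies ∇×[(u·∇)u](x,y) = iα·e^{2iαx}·(ψ(y)ψ'''(y) − ψ'(y)ψ''(y)). -/
/-- Partial derivative in `x` of a complex-valued field on `ℝ²`. -/
noncomputable def pdx (f : ℝ × ℝ → ℂ) (q : ℝ × ℝ) : ℂ :=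
  deriv (fun x => f (x, q.2)) q.1

/-- Partial derivative in `y` of a complex-valued field on `ℝ²`. -/
noncomputable def pdy (f : ℝ × ℝ → ℂ) (q : ℝ × ℝ) : ℂ :=
  deriv (fun y => f (q.1, y)) q.2

/-- For `u = ∇⊥(e^{iαx}ψ(y))`, the scalar curl of the convective term `(u·∇)u` is
`iα·e^{2iαx}·(ψψ''' − ψ'ψ'')`. -/
theorem curl_convective_self (α : ℝ) (ψ : ℝ → ℂ) (hψ : ContDiff ℝ 3 ψ)
    (u1 u2 : ℝ × ℝ → ℂ)
    (hu1 : ∀ q : ℝ × ℝ, u1 q = Complex.exp (Complex.I * α * q.1) * (-(deriv ψ q.2)))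
    (hu2 : ∀ q : ℝ × ℝ, u2 q = Complex.exp (Complex.I * α * q.1) * (Complex.I * α * ψ q.2)) :
    ∀ q : ℝ × ℝ,
      pdx (fun p => u1 p * pdx u2 p + u2 p * pdy u2 p) q
        - pdy (fun p => u1 p * pdx u1 p + u2 p * pdy u1 p) q
      = Complex.I * α * Complex.exp (2 * Complex.I * α * q.1) *
          (ψ q.2 * deriv (deriv (deriv ψ)) q.2 - deriv ψ q.2 * deriv (deriv ψ) q.2) := by
  have h2 : ContDiff ℝ 2 (deriv ψ) := ContDiff.deriv' hψ
  have h1 : ContDiff ℝ 1 (deriv (deriv ψ)) := ContDiff.deriv' h2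
  have d0 : ∀ y, HasDerivAt ψ (deriv ψ y) y := fun y =>
    (hψ.differentiable (by norm_num) y).hasDerivAt
  have d1 : ∀ y, HasDerivAt (deriv ψ) (deriv (deriv ψ) y) y := fun y =>
    (h2.differentiable (by norm_num) y).hasDerivAt
  have d2 : ∀ y, HasDerivAt (deriv (deriv ψ)) (deriv (deriv (deriv ψ)) y) y := fun y =>
    (h1.differentiable (by norm_num) y).hasDerivAt
  have dE : ∀ x : ℝ, HasDerivAt (fun x : ℝ => Complex.exp (Complex.I * α * x))
      (Complex.exp (Complex.I * α * x) * (Complex.I * α)) x := by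
    intro x
    have h := ((Complex.ofRealCLM.hasDerivAt (x := x)).const_mul (Complex.I * α)).cexp
    simpa using h
  obtain rfl : u1 = _ := funext hu1
  obtain rfl : u2 = _ := funext hu2
  have x1 : ∀ p : ℝ × ℝ, pdx (fun q : ℝ × ℝ =>
      Complex.exp (Complex.I * α * q.1) * (-(deriv ψ q.2))) p =
      Complex.exp (Complex.I * α * p.1) * (Complex.I * α) * (-(deriv ψ p.2)) :=
    by intro p; unfold pdx; exact ((dE p.1).mul_const (-(deriv ψ p.2))).deriv
  have x2 : ∀ p : ℝ × ℝ, pdx (fun q : ℝ × ℝ =>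
      Complex.exp (Complex.I * α * q.1) * (Complex.I * α * ψ q.2)) p =
      Complex.exp (Complex.I * α * p.1) * (Complex.I * α) * (Complex.I * α * ψ p.2) :=
    by intro p; unfold pdx; exact ((dE p.1).mul_const (Complex.I * α * ψ p.2)).deriv
  have y1 : ∀ p : ℝ × ℝ, pdy (fun q : ℝ × ℝ =>
      Complex.exp (Complex.I * α * q.1) * (-(deriv ψ q.2))) p =
      Complex.exp (Complex.I * α * p.1) * (-(deriv (deriv ψ) p.2)) :=
    by intro p; unfold pdy; exact ((d1 p.2).neg.const_mul (Complex.exp (Complex.I * α * p.1))).deriv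
  have y2 : ∀ p : ℝ × ℝ, pdy (fun q : ℝ × ℝ =>
      Complex.exp (Complex.I * α * q.1) * (Complex.I * α * ψ q.2)) p =
      Complex.exp (Complex.I * α * p.1) * (Complex.I * α * deriv ψ p.2) :=
    by intro p; unfold pdy; exact (((d0 p.2).const_mul (Complex.I * (α : ℂ))).const_mul
      (Complex.exp (Complex.I * α * p.1))).deriv
  intro q
  simp only [x1, x2, y1, y2]
  have hE : Complex.exp (2 * Complex.I * α * q.1) =
      Complex.exp (Complex.I * α * q.1) * Complex.exp (Complex.I * α * q.1) := by
    rw [← Complex.exp_add]; congr 1; ring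
  rw [hE]
  have hz : pdx (fun p : ℝ × ℝ => Complex.exp (Complex.I * α * p.1) * (-(deriv ψ p.2)) *
      (Complex.exp (Complex.I * α * p.1) * (Complex.I * α) * (Complex.I * α * ψ p.2)) +
      Complex.exp (Complex.I * α * p.1) * (Complex.I * α * ψ p.2) *
      (Complex.exp (Complex.I * α * p.1) * (Complex.I * α * deriv ψ p.2))) q = 0 := by
    have : ∀ p : ℝ × ℝ, Complex.exp (Complex.I * α * p.1) * (-(deriv ψ p.2)) *
      (Complex.exp (Complex.I * α * p.1) * (Complex.I * α) * (Complex.I * α * ψ p.2)) +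
      Complex.exp (Complex.I * α * p.1) * (Complex.I * α * ψ p.2) *
      (Complex.exp (Complex.I * α * p.1) * (Complex.I * α * deriv ψ p.2)) = 0 := by
      intro p; ring
    simp only [this]
    simp only [pdx, deriv_const]
  rw [hz]
  generalize hk : Complex.I * (α : ℂ) = k
  unfold pdy
  dsimp only
  generalize Complex.exp (k * q.1) = e
  have hd := ((((d1 q.2).neg.const_mul e).mul ((d1 q.2).neg.const_mul (e * k))).add
    ((((d0 q.2).const_mul k).const_mul e).mul ((d2 q.2).neg.const_mul e))).deriv
  refine (congrArg (fun z => 0 - z) hd).trans ?_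
  simp only [Pi.neg_apply]
  ring
end

section
/- Let α ∈ ℝ and let ψ : ℝ → ℂ be three times continuously differentiable. Define u(x,y) = e^{iαx}·(−ψ'(y), iα·ψ(y)) and let ū denote the componentwise complex conjugate of u. Then the scalar curl of the symmetric convective term satisfies ∇×[(u·∇)ū + (ū·∇)u](x,y) = 2α·Im( \overline{ψ'(y)}·ψ''(y) + \overline{ψ(y)}·ψ'''(y) ); in particular this expression is real-valued and independent of x. -/
theorem aux_pdx (c : ℂ) (g : ℝ → ℂ) (f : ℝ × ℝ → ℂ)
    (hf : ∀ q : ℝ × ℝ, f q = Complex.exp (c * q.1) * g q.2) (q : ℝ × ℝ) :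
    pdx f q = c * Complex.exp (c * q.1) * g q.2 := by
  unfold pdx
  simp only [hf]
  have h1 : HasDerivAt (fun x : ℝ => c * (x : ℂ)) (c * 1) q.1 :=
    (Complex.ofRealCLM.hasDerivAt (x := q.1)).const_mul c
  have h2 := (h1.cexp).mul_const (g q.2)
  rw [h2.deriv]
  ring

theorem aux_pdy (c : ℂ) (g g' : ℝ → ℂ) (f : ℝ × ℝ → ℂ)
    (hf : ∀ q : ℝ × ℝ, f q = Complex.exp (c * q.1) * g q.2)
    (hg : ∀ y, HasDerivAt g (g' y) y) (q : ℝ × ℝ) :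
    pdy f q = Complex.exp (c * q.1) * g' q.2 := by
  unfold pdy
  simp only [hf]
  exact ((hg q.2).const_mul _).deriv

/-- For `u = ∇⊥(e^{iαx}ψ(y))` and its componentwise conjugate `ū`, the scalar curl of
`(u·∇)ū + (ū·∇)u` equals the real, `x`-independent quantity
`2α·Im(conj(ψ')·ψ'' + conj(ψ)·ψ''')`. -/
theorem curl_convective_conjugate (α : ℝ) (ψ : ℝ → ℂ) (hψ : ContDiff ℝ 3 ψ)
    (u1 u2 ub1 ub2 : ℝ × ℝ → ℂ)
    (hu1 : ∀ q : ℝ × ℝ, u1 q = Complex.exp (Complex.I * α * q.1) * (-(deriv ψ q.2)))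
    (hu2 : ∀ q : ℝ × ℝ, u2 q = Complex.exp (Complex.I * α * q.1) * (Complex.I * α * ψ q.2))
    (hub1 : ∀ q, ub1 q = (starRingEnd ℂ) (u1 q))
    (hub2 : ∀ q, ub2 q = (starRingEnd ℂ) (u2 q)) :
    ∀ q : ℝ × ℝ,
      pdx (fun p => u1 p * pdx ub2 p + u2 p * pdy ub2 p
            + ub1 p * pdx u2 p + ub2 p * pdy u2 p) q
        - pdy (fun p => u1 p * pdx ub1 p + u2 p * pdy ub1 p
            + ub1 p * pdx u1 p + ub2 p * pdy u1 p) q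
      = ((2 * α * ((starRingEnd ℂ) (deriv ψ q.2) * deriv (deriv ψ) q.2
            + (starRingEnd ℂ) (ψ q.2) * deriv (deriv (deriv ψ)) q.2).im : ℝ) : ℂ) := by
  have d0 : ∀ y, HasDerivAt ψ (deriv ψ y) y := fun y =>
    ((hψ.differentiable (by norm_num)) y).hasDerivAt
  have c1 : ContDiff ℝ 2 (deriv ψ) := by
    have := (contDiff_succ_iff_deriv (n := 2) (f := ψ)).1 (by norm_num; exact hψ)
    exact this.2.2
  have c2 : ContDiff ℝ 1 (deriv (deriv ψ)) := by
    have := (contDiff_succ_iff_deriv (n := 1) (f := deriv ψ)).1 (by norm_num; exact c1)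
    exact this.2.2
  have d1 : ∀ y, HasDerivAt (deriv ψ) (deriv (deriv ψ) y) y := fun y =>
    ((c1.differentiable (by norm_num)) y).hasDerivAt
  have d2 : ∀ y, HasDerivAt (deriv (deriv ψ)) (deriv (deriv (deriv ψ)) y) y := fun y =>
    ((c2.differentiable (by norm_num)) y).hasDerivAt
  generalize deriv (deriv (deriv ψ)) = ψ3 at *
  generalize deriv (deriv ψ) = ψ2 at *
  generalize deriv ψ = ψ1 at *
  have e0 : ∀ y, HasDerivAt (fun y => (starRingEnd ℂ) (ψ y)) ((starRingEnd ℂ) (ψ1 y)) y :=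
    fun y => (d0 y).star
  have e1 : ∀ y, HasDerivAt (fun y => (starRingEnd ℂ) (ψ1 y)) ((starRingEnd ℂ) (ψ2 y)) y :=
    fun y => (d1 y).star
  have e2 : ∀ y, HasDerivAt (fun y => (starRingEnd ℂ) (ψ2 y)) ((starRingEnd ℂ) (ψ3 y)) y :=
    fun y => (d2 y).star
  have hb1 : ∀ q : ℝ × ℝ, ub1 q = Complex.exp (-(Complex.I * α) * q.1)
      * (fun y => -((starRingEnd ℂ) (ψ1 y))) q.2 := by
    intro q
    rw [hub1, hu1, map_mul, ← Complex.exp_conj]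
    simp
  have hb2 : ∀ q : ℝ × ℝ, ub2 q = Complex.exp (-(Complex.I * α) * q.1)
      * (fun y => -(Complex.I * α) * ((starRingEnd ℂ) (ψ y))) q.2 := by
    intro q
    rw [hub2, hu2, map_mul, ← Complex.exp_conj]
    simp
  have x1 := aux_pdx (Complex.I * α) (fun y => -(ψ1 y)) u1 hu1
  have x2 := aux_pdx (Complex.I * α) (fun y => Complex.I * α * ψ y) u2 hu2
  have xb1 := aux_pdx (-(Complex.I * α))
    (fun y => -((starRingEnd ℂ) (ψ1 y))) ub1 hb1
  have xb2 := aux_pdx (-(Complex.I * α))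
    (fun y => -(Complex.I * α) * ((starRingEnd ℂ) (ψ y))) ub2 hb2
  have y1 := aux_pdy (Complex.I * α) (fun y => -(ψ1 y)) _ u1 hu1 (fun y => (d1 y).neg)
  have y2 := aux_pdy (Complex.I * α) (fun y => Complex.I * α * ψ y) _ u2 hu2
    (fun y => (d0 y).const_mul _)
  have yb1 := aux_pdy (-(Complex.I * α))
    (fun y => -((starRingEnd ℂ) (ψ1 y))) _ ub1 hb1 (fun y => (e1 y).neg)
  have yb2 := aux_pdy (-(Complex.I * α))
    (fun y => -(Complex.I * α) * ((starRingEnd ℂ) (ψ y))) _ ub2 hb2 (fun y => (e0 y).const_mul _)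
  have hE : ∀ x : ℝ, Complex.exp (Complex.I * α * x) * Complex.exp (-(Complex.I * α) * x) = 1 := by
    intro x
    rw [← Complex.exp_add]
    simp
  have F2 : (fun p => u1 p * pdx ub2 p + u2 p * pdy ub2 p
            + ub1 p * pdx u2 p + ub2 p * pdy u2 p)
      = fun p : ℝ × ℝ => (α : ℂ) ^ 2 * (2 * (ψ1 p.2 * (starRingEnd ℂ) (ψ p.2)
          + ψ p.2 * (starRingEnd ℂ) (ψ1 p.2))) := by
    funext p
    rw [x2, xb2, y2, yb2, hu1, hu2, hb1, hb2]
    have h := hE p.1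
    have hI := Complex.I_sq
    generalize Complex.exp (Complex.I * α * p.1) = E at *
    generalize Complex.exp (-(Complex.I * α) * p.1) = E' at *
    linear_combination (-(Complex.I ^ 2 * (α : ℂ) ^ 2) * (2 * (ψ1 p.2 * (starRingEnd ℂ) (ψ p.2)
          + ψ p.2 * (starRingEnd ℂ) (ψ1 p.2)))) * h - (α : ℂ) ^ 2 * (2 * (ψ1 p.2 * (starRingEnd ℂ) (ψ p.2)
          + ψ p.2 * (starRingEnd ℂ) (ψ1 p.2))) * hI
  have F1 : (fun p => u1 p * pdx ub1 p + u2 p * pdy ub1 p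
            + ub1 p * pdx u1 p + ub2 p * pdy u1 p)
      = fun p : ℝ × ℝ => Complex.I * α * ((starRingEnd ℂ) (ψ p.2) * ψ2 p.2
          - ψ p.2 * (starRingEnd ℂ) (ψ2 p.2)) := by
    funext p
    rw [x1, xb1, y1, yb1, hu1, hu2, hb1, hb2]
    have h := hE p.1
    generalize Complex.exp (Complex.I * α * p.1) = E at *
    generalize Complex.exp (-(Complex.I * α) * p.1) = E' at *
    linear_combination (Complex.I * α * ((starRingEnd ℂ) (ψ p.2) * ψ2 p.2
          - ψ p.2 * (starRingEnd ℂ) (ψ2 p.2))) * h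
  intro q
  rw [F1, F2]
  have G2 : pdx (fun p : ℝ × ℝ => (α : ℂ) ^ 2 * (2 * (ψ1 p.2 * (starRingEnd ℂ) (ψ p.2)
          + ψ p.2 * (starRingEnd ℂ) (ψ1 p.2)))) q = 0 := by
    simp [pdx]
  have G1 := ((((e0 q.2).mul (d2 q.2)).sub ((d0 q.2).mul (e2 q.2))).const_mul
    (Complex.I * α)).deriv
  rw [G2]
  unfold pdy
  refine (congrArg (fun z => 0 - z) G1).trans ?_
  apply Complex.ext
  · simp
    ring
  · simp
end
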